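/- The sequence ℓ_n³·(a_n·ζ(3) − b_n) tends to 0 as n tends to infinity. -/

import Mathlib

/-- `lcmUpTo n` is `lcm(1, 2, ..., n)` (and `1` for `n = 0`). -/
def lcmUpTo (n : ℕ) : ℕ := (Finset.Icc 1 n).lcm id

/-- ζ(3), the sum of the series ∑_{m=1}^∞ 1/m³. -/
noncomputable def zeta3 : ℝ := ∑' m : ℕ, 1 / ((m : ℝ) + 1) ^ 3

/-- `z n = ∑_{m=1}^n 1/m³`. -/
noncomputable def zseq (n : ℕ) : ℝ := ∑ m ∈ Finset.Icc 1 n, 1 / (m : ℝ) ^ 3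

/-- `a n = ∑_{k=0}^n C(n,k)² C(n+k,k)²`. -/
noncomputable def aseq (n : ℕ) : ℝ :=
  ∑ k ∈ Finset.range (n + 1), (n.choose k : ℝ) ^ 2 * ((n + k).choose k : ℝ) ^ 2

/-- `b n = a n * z n + ∑_{k=1}^n ∑_{m=1}^k (-1)^{m+1} C(n,k)² C(n+k,k)²
      / (2 m³ C(n,m) C(n+m,m))`. -/
noncomputable def bseq (n : ℕ) : ℝ :=
  aseq n * zseq n +
    ∑ k ∈ Finset.Icc 1 n, ∑ m ∈ Finset.Icc 1 k,
      (-1 : ℝ) ^ (m + 1) * (n.choose k : ℝ) ^ 2 * ((n + k).choose k : ℝ) ^ 2 /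
        (2 * (m : ℝ) ^ 3 * (n.choose m : ℝ) * ((n + m).choose m : ℝ))


/-- `t n k = C(n,k) C(n+k,k)`. -/
noncomputable def tt (n k : ℕ) : ℝ := (n.choose k : ℝ) * ((n + k).choose k : ℝ)

/-- The numbers c(n,k) in the proof by Apéry. -/
noncomputable def cc (n k : ℕ) : ℝ :=
  zseq n + ∑ m ∈ Finset.Icc 1 k, (-1 : ℝ) ^ (m + 1) / (2 * (m : ℝ) ^ 3 * tt n m)

theorem tt_pos {n k : ℕ} (h : k ≤ n) : 0 < tt n k := by
  unfold tt
  have h1 := Nat.choose_pos h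
  have h2 := Nat.choose_pos (Nat.le_add_left k n)
  positivity

theorem tt_zero_of_lt {n k : ℕ} (h : n < k) : tt n k = 0 := by
  simp [tt, Nat.choose_eq_zero_of_lt h]

theorem tt_zero_right (n : ℕ) : tt n 0 = 1 := by simp [tt]

theorem tt_succ_left {n k : ℕ} (h : k ≤ n + 1) :
    tt (n + 1) k * ((n : ℝ) + 1 - k) = ((n : ℝ) + 1 + k) * tt n k := by
  have h1 := Nat.choose_mul_succ_eq n k
  have h2 := Nat.choose_mul_succ_eq (n + k) k
  have e : n + k + 1 - k = n + 1 := by omega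
  rw [e] at h2
  have h1' : (n.choose k : ℝ) * (n + 1) = ((n + 1).choose k : ℝ) * ((n : ℝ) + 1 - k) := by
    have := congrArg (Nat.cast : ℕ → ℝ) h1
    push_cast [Nat.cast_sub h] at this
    exact this
  have h2' : ((n + k).choose k : ℝ) * (n + k + 1) = ((n + 1 + k).choose k : ℝ) * (n + 1) := by
    have := congrArg (Nat.cast : ℕ → ℝ) h2
    rw [show n + k + 1 = n + 1 + k by ring] at this
    push_cast at this
    linear_combination this
  have hn : (n : ℝ) + 1 ≠ 0 := by positivity
  unfold tt
  apply mul_right_cancel₀ hn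
  linear_combination (-((n + 1 + k).choose k : ℝ) * (n + 1)) * h1' - (n.choose k : ℝ) * (n + 1) * h2'

theorem tt_succ_right {n k : ℕ} (h : k ≤ n) :
    tt n (k + 1) * ((k : ℝ) + 1) ^ 2 = ((n : ℝ) + k + 1) * (n - k) * tt n k := by
  have h1 := Nat.choose_succ_right_eq n k
  have h2 := Nat.add_one_mul_choose_eq (n + k) k
  have h1' : (n.choose (k + 1) : ℝ) * (k + 1) = (n.choose k : ℝ) * ((n : ℝ) - k) := by
    have := congrArg (Nat.cast : ℕ → ℝ) h1
    push_cast [Nat.cast_sub h] at this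
    exact this
  have h2' : ((n : ℝ) + k + 1) * ((n + k).choose k : ℝ)
      = ((n + (k + 1)).choose (k + 1) : ℝ) * (k + 1) := by
    have := congrArg (Nat.cast : ℕ → ℝ) h2
    push_cast at this
    exact this
  unfold tt
  linear_combination ((n + (k + 1)).choose (k + 1) : ℝ) * (k + 1) * h1' -
    (n.choose k : ℝ) * ((n : ℝ) - k) * h2'

theorem zseq_succ (n : ℕ) : zseq (n + 1) = zseq n + 1 / ((n : ℝ) + 1) ^ 3 := by
  unfold zseq
  rw [Finset.sum_Icc_succ_top (by omega)]
  push_cast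
  rfl

theorem cc_zero (n : ℕ) : cc n 0 = zseq n := by simp [cc]

theorem cc_succ (n k : ℕ) :
    cc n (k + 1) = cc n k + (-1 : ℝ) ^ k / (2 * ((k : ℝ) + 1) ^ 3 * tt n (k + 1)) := by
  unfold cc
  rw [Finset.sum_Icc_succ_top (by omega)]
  push_cast
  ring

/-- The difference of `c` in the first index. -/
theorem cc_diff (n k : ℕ) (h : k ≤ n) :
    cc (n + 1) k = cc n k + (-1 : ℝ) ^ k / (((n : ℝ) + 1) ^ 2 * ((n : ℝ) + 1 - k) * tt (n + 1) k) := by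
  induction k with
  | zero =>
    rw [cc_zero, cc_zero, zseq_succ, tt_zero_right]
    simp only [pow_zero, Nat.cast_zero, sub_zero, mul_one]
    ring
  | succ k ih =>
    have hk : k ≤ n := by omega
    rw [cc_succ, cc_succ, ih hk]
    obtain ⟨j, rfl⟩ : ∃ j, n = k + 1 + j := ⟨n - (k + 1), by omega⟩
    have e1 := @tt_succ_left (k + 1 + j) (k + 1) (by omega)
    have e2 := @tt_succ_right (k + 1 + j + 1) k (by omega)
    have p0 := @tt_pos (k + 1 + j) (k + 1) (by omega)
    have p1 := @tt_pos (k + 1 + j + 1) (k + 1) (by omega)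
    have p2 := @tt_pos (k + 1 + j + 1) k (by omega)
    generalize tt (k + 1 + j) (k + 1) = t0 at *
    generalize tt (k + 1 + j + 1) (k + 1) = t1 at *
    generalize tt (k + 1 + j + 1) k = t2 at *
    push_cast at *
    have e1' : t0 = t1 * ((j : ℝ) + 1) / (2 * k + j + 3) := by
      rw [eq_div_iff (by positivity)]
      linear_combination -e1
    have e2' : t2 = t1 * ((k : ℝ) + 1) ^ 2 / ((2 * k + j + 3) * (j + 2)) := by
      rw [eq_div_iff (by positivity)]
      linear_combination -e2
    have d1 : (k : ℝ) + 1 + j + 1 - k = j + 2 := by ring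
    have d2 : (k : ℝ) + 1 + j + 1 - (k + 1) = j + 1 := by ring
    rw [d1, d2, e1', e2', pow_succ]
    field_simp
    ring

/-- The polynomial of the Apéry recurrence. -/
noncomputable def PP (x : ℝ) : ℝ := 34 * x ^ 3 + 51 * x ^ 2 + 27 * x + 5

noncomputable def BB (n k : ℕ) : ℝ :=
  4 * (2 * (n : ℝ) + 1) * (k * (2 * k + 1) - (2 * n + 1) ^ 2) * tt n k ^ 2

noncomputable def AA (n k : ℕ) : ℝ :=
  BB n k * cc n k - 5 * (2 * (n : ℝ) + 1) * (-1) ^ k * k / (n * (n + 1)) * tt n k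

theorem step_aux (n k : ℕ) (h : k ≤ n) :
    (((n : ℝ) + 2) ^ 3 * tt (n + 2) (k + 1) ^ 2 - PP (n + 1) * tt (n + 1) (k + 1) ^ 2
      + ((n : ℝ) + 1) ^ 3 * tt n (k + 1) ^ 2 = BB (n + 1) (k + 1) - BB (n + 1) k) ∧
    (((n : ℝ) + 2) ^ 3 * (tt (n + 2) (k + 1) ^ 2 * cc (n + 2) (k + 1))
      - PP (n + 1) * (tt (n + 1) (k + 1) ^ 2 * cc (n + 1) (k + 1))
      + ((n : ℝ) + 1) ^ 3 * (tt n (k + 1) ^ 2 * cc n (k + 1))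
      = AA (n + 1) (k + 1) - AA (n + 1) k) := by
  have hc0 : tt n (k + 1) ^ 2 * cc n (k + 1) = tt n (k + 1) ^ 2 * cc (n + 1) (k + 1)
      + (-1) ^ k * ((n : ℝ) - k) * tt (n + 1) (k + 1) / (((n : ℝ) + 1) ^ 2 * (n + k + 2) ^ 2) := by
    rcases h.lt_or_eq with h | rfl
    · have hd := cc_diff n (k + 1) (by omega)
      obtain ⟨j, rfl⟩ : ∃ j, n = k + 1 + j := ⟨n - (k + 1), by omega⟩
      have e1 := @tt_succ_left (k + 1 + j) (k + 1) (by omega)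
      have p0 := @tt_pos (k + 1 + j) (k + 1) (by omega)
      have p1 := @tt_pos (k + 1 + j + 1) (k + 1) (by omega)
      rw [hd]
      generalize tt (k + 1 + j) (k + 1) = t0 at *
      generalize tt (k + 1 + j + 1) (k + 1) = t1 at *
      push_cast at *
      have e1' : t0 = t1 * ((j : ℝ) + 1) / (2 * k + j + 3) := by
        rw [eq_div_iff (by positivity)]
        linear_combination -e1
      have d2 : (k : ℝ) + 1 + j + 1 - (k + 1) = j + 1 := by ring
      have d3 : (k : ℝ) + 1 + j - k = j + 1 := by ring
      rw [d2, d3, e1', pow_succ]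
      field_simp
      ring
    · rw [tt_zero_of_lt (by omega : k < k + 1)]
      simp
  have hc2 := cc_diff (n + 1) (k + 1) (by omega)
  have hc1 := cc_succ (n + 1) k
  have e0 := @tt_succ_left n (k + 1) (by omega)
  have e2 := @tt_succ_left (n + 1) (k + 1) (by omega)
  have e1 := @tt_succ_right (n + 1) k (by omega)
  have p1 := @tt_pos (n + 1) (k + 1) (by omega)
  have p2 := @tt_pos (n + 2) (k + 1) (by omega)
  have hc1' : cc (n + 1) k = cc (n + 1) (k + 1)
      - (-1 : ℝ) ^ k / (2 * ((k : ℝ) + 1) ^ 3 * tt (n + 1) (k + 1)) := by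
    linear_combination -hc1
  rw [hc0]
  unfold AA BB PP
  rw [hc1', hc2]
  obtain ⟨j, rfl⟩ : ∃ j, n = k + j := ⟨n - k, by omega⟩
  clear hc0 hc1 hc1' hc2
  rw [show k + j + 1 + 1 = k + j + 2 by ring] at *
  generalize tt (k + j) (k + 1) = t0 at *
  generalize tt (k + j + 1) (k + 1) = t1 at *
  generalize tt (k + j + 2) (k + 1) = t2 at *
  generalize tt (k + j + 1) k = t3 at *
  generalize cc (k + j + 1) (k + 1) = c at *
  push_cast at *
  have e0' : t0 = t1 * (j : ℝ) / (2 * k + j + 2) := by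
    rw [eq_div_iff (by positivity)]
    linear_combination -e0
  have e2' : t2 = t1 * (2 * k + j + 3) / ((j : ℝ) + 1) := by
    rw [eq_div_iff (by positivity)]
    linear_combination e2
  have e3' : t3 = t1 * ((k : ℝ) + 1) ^ 2 / ((2 * k + j + 2) * (j + 1)) := by
    rw [eq_div_iff (by positivity)]
    linear_combination -e1
  have d2 : (k : ℝ) + j + 1 + 1 - (k + 1) = j + 1 := by ring
  have d3 : (k : ℝ) + j - k = j := by ring
  rw [d2, d3, e0', e2', e3', pow_succ]
  constructor
  · field_simp
    ring
  · field_simp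
    ring

theorem sum_aux (n K : ℕ) (h : K ≤ n + 1) :
    (∑ k ∈ Finset.range (K + 1), (((n : ℝ) + 2) ^ 3 * tt (n + 2) k ^ 2
      - PP (n + 1) * tt (n + 1) k ^ 2 + ((n : ℝ) + 1) ^ 3 * tt n k ^ 2) = BB (n + 1) K) ∧
    (∑ k ∈ Finset.range (K + 1), (((n : ℝ) + 2) ^ 3 * (tt (n + 2) k ^ 2 * cc (n + 2) k)
      - PP (n + 1) * (tt (n + 1) k ^ 2 * cc (n + 1) k)
      + ((n : ℝ) + 1) ^ 3 * (tt n k ^ 2 * cc n k)) = AA (n + 1) K) := by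
  induction K with
  | zero =>
    simp only [zero_add, Finset.sum_range_one, tt_zero_right, cc_zero, AA, BB, PP,
      zseq_succ]
    push_cast
    constructor
    · ring
    · field_simp
      ring
  | succ K ih =>
    obtain ⟨i1, i2⟩ := ih (by omega)
    obtain ⟨s1, s2⟩ := step_aux n K (by omega)
    rw [Finset.sum_range_succ, Finset.sum_range_succ _ (K + 1), i1, i2]
    constructor
    · linear_combination s1
    · linear_combination s2

theorem aseq_eq (n j : ℕ) : aseq n = ∑ k ∈ Finset.range (n + 1 + j), tt n k ^ 2 := by
  rw [Finset.sum_range_add]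
  rw [Finset.sum_eq_zero (s := Finset.range j)]
  · simp [aseq, tt, mul_pow]
  · intro i _
    rw [tt_zero_of_lt (by omega)]
    simp

theorem bseq_eq (n j : ℕ) : bseq n = ∑ k ∈ Finset.range (n + 1 + j), tt n k ^ 2 * cc n k := by
  rw [Finset.sum_range_add]
  rw [Finset.sum_eq_zero (s := Finset.range j)]
  · simp only [cc, mul_add, Finset.sum_add_distrib, ← Finset.sum_mul, add_zero, bseq]
    congr 1
    · simp [aseq, tt, mul_pow]
    · rw [Finset.range_eq_Ico, Finset.sum_eq_sum_Ico_succ_bot (by omega)]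
      simp only [zero_add, Finset.Icc_eq_empty_of_lt zero_lt_one, Finset.sum_empty, mul_zero]
      rw [Finset.Ico_add_one_right_eq_Icc]
      refine Finset.sum_congr rfl fun k _ => ?_
      rw [Finset.mul_sum]
      refine Finset.sum_congr rfl fun m _ => ?_
      unfold tt
      ring
  · intro i _
    rw [tt_zero_of_lt (by omega)]
    simp

theorem rec_ab (n : ℕ) :
    (((n : ℝ) + 2) ^ 3 * aseq (n + 2) - PP (n + 1) * aseq (n + 1)
      + ((n : ℝ) + 1) ^ 3 * aseq n = 0) ∧
    (((n : ℝ) + 2) ^ 3 * bseq (n + 2) - PP (n + 1) * bseq (n + 1)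
      + ((n : ℝ) + 1) ^ 3 * bseq n = 0) := by
  obtain ⟨s1, s2⟩ := sum_aux n (n + 1) le_rfl
  have hz1 := @tt_zero_of_lt (n + 1) (n + 2) (by omega)
  have hz0 := @tt_zero_of_lt n (n + 2) (by omega)
  have e1 := @tt_succ_left (n + 1) (n + 1) (by omega)
  have e2 := @tt_succ_right (n + 2) (n + 1) (by omega)
  have hc1 := cc_succ (n + 2) (n + 1)
  have hc2 := cc_diff (n + 1) (n + 1) (by omega)
  have p1 := @tt_pos (n + 1) (n + 1) (by omega)
  rw [show n + 1 + 1 = n + 2 by ring] at *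
  rw [aseq_eq (n + 2) 0, aseq_eq (n + 1) 1, aseq_eq n 2, bseq_eq (n + 2) 0, bseq_eq (n + 1) 1,
    bseq_eq n 2]
  rw [show n + 2 + 1 + 0 = n + 2 + 1 by ring, show n + 1 + 1 + 1 = n + 2 + 1 by ring,
    show n + 1 + 2 = n + 2 + 1 by ring]
  simp only [Finset.mul_sum]
  rw [← Finset.sum_sub_distrib, ← Finset.sum_add_distrib, ← Finset.sum_sub_distrib,
    ← Finset.sum_add_distrib, Finset.sum_range_succ, Finset.sum_range_succ _ (n + 2), s1, s2,
    hz1, hz0, hc1, hc2]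
  clear s1 s2 hc1 hc2 hz1 hz0
  unfold AA BB
  push_cast at *
  generalize tt (n + 1) (n + 1) = t1 at *
  generalize tt (n + 2) (n + 1) = t2 at *
  generalize tt (n + 2) (n + 2) = t3 at *
  generalize cc (n + 1) (n + 1) = c at *
  have e1' : t2 = t1 * (2 * n + 3) := by linear_combination e1
  have e2' : t3 = t1 * (2 * n + 3) * 2 / (n + 2) := by
    rw [eq_div_iff (by positivity)]
    have : (n : ℝ) + 2 ≠ 0 := by positivity
    apply mul_right_cancel₀ this
    rw [e1'] at e2
    linear_combination e2
  have d : (n : ℝ) + 1 + 1 - (n + 1) = 1 := by ring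
  rw [d, e2', e1']
  constructor
  · field_simp
    ring
  · field_simp
    ring

open ArithmeticFunction in
theorem log_fact_eq (n N : ℕ) (h : n ≤ N) :
    Real.log (n.factorial) = ∑ d ∈ Finset.Ioc 0 N, vonMangoldt d * ((n / d : ℕ) : ℝ) := by
  have h1 := sum_Ioc_mul_zeta_eq_sum vonMangoldt n
  rw [vonMangoldt_mul_zeta] at h1
  have h2 : Real.log (n.factorial) = ∑ i ∈ Finset.Ioc 0 n, Real.log i := by
    clear h1 h
    induction n with
    | zero => simp
    | succ n ih =>
      rw [Nat.factorial_succ, Finset.sum_Ioc_succ_top (by omega), ← ih]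
      push_cast
      rw [Real.log_mul (by positivity) (by positivity)]
      ring
  rw [h2]
  have h3 : ∑ i ∈ Finset.Ioc 0 n, Real.log i = ∑ d ∈ Finset.Ioc 0 n, vonMangoldt d * ((n / d : ℕ) : ℝ) := by
    rw [← h1]
    rfl
  rw [h3]
  apply Finset.sum_subset
  · intro x hx
    simp at hx ⊢
    omega
  · intro x hx hx'
    simp at hx hx'
    rw [Nat.div_eq_of_lt (by omega)]
    simp

open ArithmeticFunction in
theorem psi_diff (n : ℕ) :
    Chebyshev.psi n - Chebyshev.psi (n / 6 : ℕ) + Real.log ((n / 2).factorial)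
      + Real.log ((n / 3).factorial) + Real.log ((n / 5).factorial)
      ≤ Real.log (n.factorial) + Real.log ((n / 30).factorial) := by
  have hpsi : Chebyshev.psi n = ∑ d ∈ Finset.Ioc 0 n, vonMangoldt d := by
    simp [Chebyshev.psi]
  have hpsi6 : Chebyshev.psi (n / 6 : ℕ)
      = ∑ d ∈ Finset.Ioc 0 n, vonMangoldt d * (if d ≤ n / 6 then 1 else 0) := by
    simp only [Chebyshev.psi, Nat.floor_natCast, mul_ite, mul_one, mul_zero]
    rw [← Finset.sum_filter]
    congr 1
    ext x
    simp
    omega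
  rw [log_fact_eq n n le_rfl, log_fact_eq (n / 2) n (by omega), log_fact_eq (n / 3) n (by omega),
    log_fact_eq (n / 5) n (by omega), log_fact_eq (n / 30) n (by omega), hpsi, hpsi6,
    ← Finset.sum_sub_distrib, ← Finset.sum_add_distrib, ← Finset.sum_add_distrib,
    ← Finset.sum_add_distrib, ← Finset.sum_add_distrib]
  apply Finset.sum_le_sum
  intro d hd
  simp only [Finset.mem_Ioc] at hd
  have hL : 0 ≤ vonMangoldt d := vonMangoldt_nonneg
  have key : 1 + n / 2 / d + n / 3 / d + n / 5 / d ≤ n / d + n / 30 / d + (if d ≤ n / 6 then 1 else 0) := by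
    rw [Nat.div_div_eq_div_mul, Nat.div_div_eq_div_mul, Nat.div_div_eq_div_mul,
      Nat.div_div_eq_div_mul, mul_comm 2, mul_comm 3, mul_comm 5, mul_comm 30,
      ← Nat.div_div_eq_div_mul, ← Nat.div_div_eq_div_mul, ← Nat.div_div_eq_div_mul,
      ← Nat.div_div_eq_div_mul]
    have h1 : 1 ≤ n / d := (Nat.one_le_div_iff (by omega)).2 hd.2
    have h6 : 6 ≤ n / d → d ≤ n / 6 := by
      intro h
      rw [Nat.le_div_iff_mul_le (by omega)] at h ⊢
      linarith
    generalize n / d = q at *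
    split_ifs with h
    · omega
    · have : q < 6 := by
        by_contra hq
        exact h (h6 (by omega))
      omega
  have key' : (1 : ℝ) + (n / 2 / d : ℕ) + (n / 3 / d : ℕ) + (n / 5 / d : ℕ)
      ≤ (n / d : ℕ) + (n / 30 / d : ℕ) + (if d ≤ n / 6 then 1 else 0) := by
    exact_mod_cast key
  nlinarith [mul_le_mul_of_nonneg_left key' hL]

theorem xlogx_mono {x y : ℝ} (hx : 1 ≤ x) (hxy : x ≤ y) :
    x * Real.log x - x ≤ y * Real.log y - y := by
  have hx0 : 0 < x := by linarith
  have hy0 : 0 < y := by linarith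
  have h := Real.one_sub_inv_le_log_of_pos (div_pos hy0 hx0)
  rw [Real.log_div hy0.ne' hx0.ne', inv_div] at h
  have h2 := mul_le_mul_of_nonneg_left h hy0.le
  have h3 : y * (1 - x / y) = y - x := by field_simp
  have h4 := mul_nonneg (sub_nonneg.2 hxy) (Real.log_nonneg hx)
  nlinarith

theorem log_fact_upper (n : ℕ) (hn : 1 ≤ n) :
    Real.log (n.factorial) ≤ n * Real.log n - n + Real.log n + 1 := by
  induction n, hn using Nat.le_induction with
  | base => simp
  | succ n hn ih =>
    have hn0 : (0 : ℝ) < n := by exact_mod_cast hn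
    have h := Real.one_sub_inv_le_log_of_pos (div_pos (by positivity : (0 : ℝ) < n + 1) hn0)
    rw [Real.log_div (by positivity) hn0.ne', inv_div] at h
    have h2 := mul_le_mul_of_nonneg_left h (by positivity : (0 : ℝ) ≤ n + 1)
    have h3 : ((n : ℝ) + 1) * (1 - n / (n + 1)) = 1 := by field_simp; ring
    rw [Nat.factorial_succ]
    push_cast
    rw [Real.log_mul (by positivity) (by positivity)]
    nlinarith

theorem log_fact_lower (n : ℕ) : n * Real.log n - n ≤ Real.log (n.factorial) := by
  rcases Nat.eq_zero_or_pos n with rfl | hn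
  · simp
  have h := Stirling.le_log_factorial_stirling hn.ne'
  have h1 : 0 ≤ Real.log n := Real.log_nonneg (by exact_mod_cast hn)
  have h2 : 0 ≤ Real.log (2 * Real.pi) := Real.log_nonneg (by nlinarith [Real.pi_gt_three])
  linarith

theorem log_fact_div_upper (n k : ℕ) (hk : 1 ≤ k) (h : k ≤ n) :
    Real.log ((n / k).factorial) ≤ n / k * (Real.log n - Real.log k) - n / k + Real.log n + 1 := by
  have hk0 : (0 : ℝ) < k := by exact_mod_cast hk
  have hn0 : (0 : ℝ) < n := by exact_mod_cast (by omega : 0 < n)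
  have h1 : 1 ≤ n / k := (Nat.one_le_div_iff (by omega)).2 h
  have h1' : (1 : ℝ) ≤ (n / k : ℕ) := by exact_mod_cast h1
  have h2 : ((n / k : ℕ) : ℝ) ≤ n / k := Nat.cast_div_le
  have h3 := xlogx_mono h1' h2
  have h4 : Real.log (n / k : ℕ) ≤ Real.log n := Real.log_le_log (by linarith)
    (by exact_mod_cast Nat.div_le_self n k)
  have h5 := log_fact_upper (n / k) h1
  rw [Real.log_div hn0.ne' hk0.ne'] at h3
  linarith

theorem log_fact_div_lower (n k : ℕ) (hk : 2 ≤ k) (h : k ≤ n) :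
    n / k * (Real.log n - Real.log k) - n / k - Real.log n ≤ Real.log ((n / k).factorial) := by
  have hk0 : (0 : ℝ) < k := by exact_mod_cast (by omega : 0 < k)
  have hn0 : (0 : ℝ) < n := by exact_mod_cast (by omega : 0 < n)
  have h1 : (1 : ℝ) ≤ n / k := by
    rw [le_div_iff₀ hk0]
    simpa using h
  have h2 : (n : ℝ) / k ≤ (n / k + 1 : ℕ) := by
    have := Nat.lt_div_mul_add (a := n) (b := k) (by omega)
    rw [div_le_iff₀ hk0]
    have h3 : n ≤ (n / k + 1) * k := by linarith
    exact_mod_cast h3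
  have h3 := xlogx_mono h1 h2
  have h5 := log_fact_lower (n / k + 1)
  have hlt : n / k + 1 ≤ n := Nat.div_lt_self (by omega) (by omega)
  have h4 : Real.log (n / k + 1 : ℕ) ≤ Real.log n := Real.log_le_log (by positivity)
    (by exact_mod_cast hlt)
  rw [Nat.factorial_succ, Nat.cast_mul, Real.log_mul (by positivity) (by positivity)] at h5
  rw [Real.log_div hn0.ne' hk0.ne'] at h3
  linarith

theorem psi_step (n : ℕ) (hn : 30 ≤ n) :
    Chebyshev.psi n ≤ Chebyshev.psi (n / 6 : ℕ) + n * (Real.log (2 ^ 14 * 3 ^ 9 * 5 ^ 5) / 30)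
      + (5 * Real.log n + 2) := by
  have h := psi_diff n
  have u1 := log_fact_div_upper n 1 (by omega) (by omega)
  have u30 := log_fact_div_upper n 30 (by omega) (by omega)
  have l2 := log_fact_div_lower n 2 (by omega) (by omega)
  have l3 := log_fact_div_lower n 3 (by omega) (by omega)
  have l5 := log_fact_div_lower n 5 (by omega) (by omega)
  rw [Nat.div_one] at u1
  have e30 : Real.log (30 : ℕ) = Real.log 2 + Real.log 3 + Real.log 5 := by
    rw [← Real.log_mul (by norm_num) (by norm_num), ← Real.log_mul (by norm_num) (by norm_num)]
    norm_num
  have e : Real.log (2 ^ 14 * 3 ^ 9 * 5 ^ 5) = 14 * Real.log 2 + 9 * Real.log 3 + 5 * Real.log 5 := by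
    rw [Real.log_mul (by norm_num) (by norm_num), Real.log_mul (by norm_num) (by norm_num),
      Real.log_pow, Real.log_pow, Real.log_pow]
    norm_num
  rw [e30] at u30
  rw [e]
  push_cast at u1 u30 l2 l3 l5
  rw [Real.log_one] at u1
  linarith

theorem psi_bound : ∃ D : ℝ, ∀ n : ℕ,
    Chebyshev.psi n ≤ n * (Real.log (2 ^ 15 * 3 ^ 9 * 5 ^ 5) / 25) + D := by
  have hl : Real.log (2 ^ 15 * 3 ^ 9 * 5 ^ 5) = Real.log 2 + Real.log (2 ^ 14 * 3 ^ 9 * 5 ^ 5) := by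
    rw [← Real.log_mul (by norm_num) (by norm_num)]
    norm_num
  have hlog2 : 0 < Real.log 2 := Real.log_pos (by norm_num)
  have hLpos : 0 < Real.log (2 ^ 14 * 3 ^ 9 * 5 ^ 5) := Real.log_pos (by norm_num)
  have hev : ∀ᶠ n : ℕ in Filter.atTop, 5 * Real.log n + 2 ≤ n * (Real.log 2 / 30) := by
    have h1 : (fun x : ℝ => 5 * Real.log x + 2) =o[Filter.atTop] (fun x : ℝ => x) := by
      apply Asymptotics.IsLittleO.add
      · exact Real.isLittleO_log_id_atTop.const_mul_left 5
      · exact Asymptotics.isLittleO_const_id_atTop 2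
    have h2 := (h1.bound (by positivity : 0 < Real.log 2 / 30)).and (Filter.eventually_ge_atTop 0)
    filter_upwards [tendsto_natCast_atTop_atTop.eventually h2] with n hn
    have h3 := hn.1
    rw [Real.norm_eq_abs, Real.norm_eq_abs, abs_of_nonneg hn.2] at h3
    have := le_abs_self (5 * Real.log n + 2)
    linarith
  obtain ⟨N, hN⟩ := Filter.eventually_atTop.1 hev
  refine ⟨Chebyshev.psi (N + 30 : ℕ), fun n => ?_⟩
  induction n using Nat.strong_induction_on with
  | _ n ih =>
    by_cases hn : n < N + 30
    · have h1 : Chebyshev.psi n ≤ Chebyshev.psi (N + 30 : ℕ) :=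
        Chebyshev.psi_mono (by exact_mod_cast hn.le)
      have h2 : 0 ≤ (n : ℝ) * (Real.log (2 ^ 15 * 3 ^ 9 * 5 ^ 5) / 25) := by
        rw [hl]
        positivity
      linarith
    · have h1 := ih (n / 6) (by omega)
      have h2 := psi_step n (by omega)
      have h3 := hN n (by omega)
      have h4 : ((n / 6 : ℕ) : ℝ) ≤ n / 6 := by exact_mod_cast (Nat.cast_div_le (α := ℝ) (m := n) (n := 6))
      rw [hl] at h1 ⊢
      have h5 := mul_le_mul_of_nonneg_right h4
        (by positivity : 0 ≤ (Real.log 2 + Real.log (2 ^ 14 * 3 ^ 9 * 5 ^ 5)) / 25)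
      linarith

theorem lcm_bound : ∃ D q : ℝ, 0 < D ∧ 0 < q ∧ q < 32 ∧ ∀ n : ℕ, (lcmUpTo n : ℝ) ^ 3 ≤ D * q ^ n := by
  obtain ⟨D, hD⟩ := psi_bound
  refine ⟨Real.exp (3 * D), Real.exp (3 * (Real.log (2 ^ 15 * 3 ^ 9 * 5 ^ 5) / 25)),
    Real.exp_pos _, Real.exp_pos _, ?_, fun n => ?_⟩
  · rw [← Real.lt_log_iff_exp_lt (by norm_num)]
    have : Real.log ((2 ^ 15 * 3 ^ 9 * 5 ^ 5) ^ 3) < Real.log (32 ^ 25) :=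
      Real.log_lt_log (by norm_num) (by norm_num)
    rw [Real.log_pow, Real.log_pow] at this
    push_cast at this
    rw [← mul_div_assoc, div_lt_iff₀ (by norm_num), mul_comm (Real.log 32)]
    exact this
  · have h1 := hD n
    rw [Chebyshev.psi_eq_log_lcmUpto] at h1
    have h2 : (0 : ℝ) < lcmUpTo n := by exact_mod_cast Nat.lcmUpto_pos n
    have h3 : Real.log (lcmUpTo n) ≤ n * (Real.log (2 ^ 15 * 3 ^ 9 * 5 ^ 5) / 25) + D := h1
    rw [Real.log_le_iff_le_exp h2] at h3
    calc (lcmUpTo n : ℝ) ^ 3 ≤ (Real.exp (n * (Real.log (2 ^ 15 * 3 ^ 9 * 5 ^ 5) / 25) + D)) ^ 3 := by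
          gcongr
      _ = _ := by
          rw [← Real.exp_nat_mul, ← Real.exp_nat_mul, ← Real.exp_add]
          congr 1
          push_cast
          ring

theorem aseq_ge_one (n : ℕ) : 1 ≤ aseq n := by
  have h : tt n 0 ^ 2 ≤ ∑ k ∈ Finset.range (n + 1 + 0), tt n k ^ 2 :=
    Finset.single_le_sum (f := fun k => tt n k ^ 2) (fun k _ => sq_nonneg _) (by simp)
  rw [← aseq_eq, tt_zero_right] at h
  simpa using h

theorem aseq_mono : Monotone aseq := by
  apply monotone_nat_of_le_succ
  intro n
  unfold aseq
  refine (Finset.sum_le_sum fun k _ => ?_).trans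
    (Finset.sum_le_sum_of_subset_of_nonneg (Finset.range_mono (Nat.le_succ (n + 1)))
      fun k _ _ => by positivity)
  have h1 : n.choose k ≤ (n + 1).choose k := Nat.choose_le_choose k (by omega)
  have h2 : (n + k).choose k ≤ (n + 1 + k).choose k := Nat.choose_le_choose k (by omega)
  gcongr

theorem casoratian (n : ℕ) :
    bseq (n + 1) * aseq n - aseq (n + 1) * bseq n = 6 / ((n : ℝ) + 1) ^ 3 := by
  induction n with
  | zero =>
    norm_num [aseq, bseq, zseq, Finset.sum_range_succ]
  | succ n ih =>
    obtain ⟨ha, hb⟩ := rec_ab n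
    rw [eq_div_iff (by positivity)] at ih ⊢
    push_cast
    linear_combination ih + aseq (n + 1) * hb - bseq (n + 1) * ha

theorem zeta3_hasSum : HasSum (fun m : ℕ => 1 / ((m : ℝ) + 1) ^ 3) zeta3 := by
  have h : Summable (fun m : ℕ => 1 / ((m : ℝ)) ^ 3) :=
    Real.summable_one_div_nat_pow.2 (by norm_num)
  have h2 := (summable_nat_add_iff 1).2 h
  push_cast at h2
  exact h2.hasSum

theorem zseq_eq (n : ℕ) : zseq n = ∑ m ∈ Finset.range n, 1 / ((m : ℝ) + 1) ^ 3 := by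
  induction n with
  | zero => simp [zseq]
  | succ n ih => rw [zseq_succ, ih, Finset.sum_range_succ]

theorem zseq_tendsto : Filter.Tendsto zseq Filter.atTop (nhds zeta3) := by
  have := zeta3_hasSum.tendsto_sum_nat
  exact this.congr fun n => (zseq_eq n).symm

theorem zseq_le (n : ℕ) : zseq n ≤ zeta3 := by
  rw [zseq_eq]
  exact sum_le_hasSum _ (fun m _ => by positivity) zeta3_hasSum

theorem zseq_nonneg (n : ℕ) : 0 ≤ zseq n := by
  unfold zseq
  positivity

theorem cc_close (n k : ℕ) (h : k ≤ n) : |cc n k - zseq n| ≤ zeta3 / (n + 1) := by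
  unfold cc
  rw [add_sub_cancel_left]
  refine (Finset.abs_sum_le_sum_abs _ _).trans ?_
  have : ∀ m ∈ Finset.Icc 1 k, |(-1 : ℝ) ^ (m + 1) / (2 * (m : ℝ) ^ 3 * tt n m)|
      ≤ 1 / (m : ℝ) ^ 3 * (1 / (n + 1)) := by
    intro m hm
    simp only [Finset.mem_Icc] at hm
    have hm0 : (0 : ℝ) < m := by exact_mod_cast hm.1
    have hp := @tt_pos n m (by omega)
    rw [abs_div, abs_pow, abs_neg, abs_one, one_pow, abs_of_pos (by positivity), ← one_div_mul_one_div_rev,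
      mul_comm]
    have h1 : 1 ≤ n.choose m := Nat.choose_pos (by omega)
    have h2 : n + 1 ≤ (n + m).choose m := by
      have : (n + 1).choose n ≤ (n + m).choose n := Nat.choose_le_choose n (by omega)
      rw [Nat.choose_succ_self_right] at this
      rwa [Nat.choose_symm_add] at this
    have h3 : (n : ℝ) + 1 ≤ tt n m := by
      have := Nat.mul_le_mul h1 h2
      unfold tt
      rw [one_mul] at this
      exact_mod_cast this
    gcongr
    have : (0 : ℝ) < (m : ℝ) ^ 3 := by positivity
    linarith
  refine (Finset.sum_le_sum this).trans ?_
  rw [← Finset.sum_mul, div_eq_mul_one_div zeta3]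
  have := zseq_le k
  unfold zseq at this
  exact mul_le_mul_of_nonneg_right this (by positivity)

theorem ratio_close (n : ℕ) : |bseq n / aseq n - zseq n| ≤ zeta3 / (n + 1) := by
  have ha : 0 < aseq n := by linarith [aseq_ge_one n]
  have e : bseq n / aseq n - zseq n = (∑ k ∈ Finset.range (n + 1 + 0), tt n k ^ 2 * (cc n k - zseq n)) / aseq n := by
    simp only [mul_sub, Finset.sum_sub_distrib, ← Finset.sum_mul, ← aseq_eq, ← bseq_eq]
    field_simp
  rw [e, abs_div, abs_of_pos ha, div_le_iff₀ ha]
  refine (Finset.abs_sum_le_sum_abs _ _).trans ?_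
  rw [aseq_eq n 0, Finset.mul_sum]
  refine Finset.sum_le_sum fun k hk => ?_
  simp only [Finset.mem_range] at hk
  rw [abs_mul, abs_of_nonneg (sq_nonneg _), mul_comm]
  exact mul_le_mul_of_nonneg_right (cc_close n k (by omega)) (sq_nonneg _)

theorem ratio_tendsto : Filter.Tendsto (fun n => bseq n / aseq n) Filter.atTop (nhds zeta3) := by
  have h0 : Filter.Tendsto (fun n : ℕ => zeta3 / ((n : ℝ) + 1)) Filter.atTop (nhds 0) := by
    have := (tendsto_one_div_add_atTop_nhds_zero_nat (𝕜 := ℝ)).const_mul zeta3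
    rw [mul_zero] at this
    exact this.congr fun n => by ring
  have h1 := squeeze_zero_norm (a := fun n : ℕ => zeta3 / ((n : ℝ) + 1))
    (f := fun n => bseq n / aseq n - zseq n) (fun n => ratio_close n) h0
  have h2 := h1.add zseq_tendsto
  simpa using h2

theorem ratio_diff (n j : ℕ) : 0 ≤ bseq (n + j) / aseq (n + j) - bseq n / aseq n ∧
    bseq (n + j) / aseq (n + j) - bseq n / aseq n
      ≤ 6 / aseq n ^ 2 * (zseq (n + j) - zseq n) := by
  have ha : 0 < aseq n := by linarith [aseq_ge_one n]
  induction j with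
  | zero => simp
  | succ j ih =>
    have h1 : 0 < aseq (n + j) := by linarith [aseq_ge_one (n + j)]
    have h2 : 0 < aseq (n + j + 1) := by linarith [aseq_ge_one (n + j + 1)]
    have hc := casoratian (n + j)
    have m1 : aseq n ≤ aseq (n + j) := aseq_mono (by omega)
    have m2 : aseq n ≤ aseq (n + j + 1) := aseq_mono (by omega)
    rw [← add_assoc, zseq_succ]
    have e : bseq (n + j + 1) / aseq (n + j + 1) - bseq (n + j) / aseq (n + j)
        = 6 / (aseq (n + j + 1) * aseq (n + j)) * (1 / (((n + j : ℕ) : ℝ) + 1) ^ 3) := by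
      rw [div_sub_div _ _ h2.ne' h1.ne', hc]
      field_simp
    have h3 : 6 / (aseq (n + j + 1) * aseq (n + j)) * (1 / (((n + j : ℕ) : ℝ) + 1) ^ 3)
        ≤ 6 / aseq n ^ 2 * (1 / (((n + j : ℕ) : ℝ) + 1) ^ 3) := by
      rw [sq]
      gcongr
    have h4 : 0 ≤ 6 / (aseq (n + j + 1) * aseq (n + j)) * (1 / (((n + j : ℕ) : ℝ) + 1) ^ 3) := by
      positivity
    constructor
    · linarith [ih.1]
    · linarith [ih.2]

theorem delta_bound (n : ℕ) : 0 ≤ aseq n * zeta3 - bseq n ∧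
    aseq n * zeta3 - bseq n ≤ 6 * zeta3 / aseq n := by
  have ha : 0 < aseq n := by linarith [aseq_ge_one n]
  have ht : Filter.Tendsto (fun j => bseq (n + j) / aseq (n + j) - bseq n / aseq n) Filter.atTop
      (nhds (zeta3 - bseq n / aseq n)) := by
    have h := (Filter.tendsto_add_atTop_iff_nat n).2 ratio_tendsto
    exact (h.congr fun j => by rw [add_comm]).sub_const _
  have l1 : 0 ≤ zeta3 - bseq n / aseq n := ge_of_tendsto' ht fun j => (ratio_diff n j).1
  have l2 : zeta3 - bseq n / aseq n ≤ 6 / aseq n ^ 2 * zeta3 := by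
    refine le_of_tendsto' ht fun j => (ratio_diff n j).2.trans ?_
    have := zseq_le (n + j)
    have := zseq_nonneg n
    gcongr
    linarith
  have e : aseq n * zeta3 - bseq n = aseq n * (zeta3 - bseq n / aseq n) := by
    field_simp
  rw [e]
  constructor
  · positivity
  · refine (mul_le_mul_of_nonneg_left l2 ha.le).trans (le_of_eq ?_)
    field_simp

theorem aseq_growth (j : ℕ) : (32 : ℝ) ^ j ≤ aseq (j + 100) := by
  induction j with
  | zero => simpa using aseq_ge_one _
  | succ j ih =>
    have hr := (rec_ab (j + 99)).1
    have hm : aseq (j + 99) ≤ aseq (j + 100) := aseq_mono (by omega)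
    rw [show j + 99 + 2 = j + 1 + 100 by ring, show j + 99 + 1 = j + 100 by ring] at hr
    unfold PP at hr
    push_cast at hr
    have hj : (0 : ℝ) ≤ j := by positivity
    have ha : 0 ≤ aseq (j + 100) := by linarith [aseq_ge_one (j + 100)]
    have h1 := mul_le_mul_of_nonneg_left hm (by positivity : (0 : ℝ) ≤ ((j : ℝ) + 99 + 1) ^ 3)
    have h2 : 0 ≤ ((j : ℝ) ^ 3 + 255 * j ^ 2 + 20931 * j + 540373) * aseq (j + 100) := by positivity
    have h3 : ((j : ℝ) + 99 + 2) ^ 3 * (32 * aseq (j + 100))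
        ≤ ((j : ℝ) + 99 + 2) ^ 3 * aseq (j + 1 + 100) := by
      nlinarith
    have h4 := le_of_mul_le_mul_left h3 (by positivity)
    rw [pow_succ]
    linarith


/-- The sequence `ℓ_n³ (a n ζ(3) - b n)` tends to `0`. -/
theorem lcm_cubed_delta_tendsto_zero :
    Filter.Tendsto (fun n : ℕ => (lcmUpTo n : ℝ) ^ 3 * (aseq n * zeta3 - bseq n))
      Filter.atTop (nhds 0) := by
  obtain ⟨D, q, hD, hq, hq32, hl⟩ := lcm_bound
  rw [← Filter.tendsto_add_atTop_iff_nat 100]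
  have hz : 0 ≤ zeta3 := (zseq_nonneg 0).trans (zseq_le 0)
  have hlim : Filter.Tendsto (fun n : ℕ => (D * q ^ 100 * (6 * zeta3)) * (q / 32) ^ n)
      Filter.atTop (nhds 0) := by
    have h := (tendsto_pow_atTop_nhds_zero_of_lt_one (by positivity : 0 ≤ q / 32)
      (by rw [div_lt_one (by norm_num)]; exact hq32)).const_mul (D * q ^ 100 * (6 * zeta3))
    rwa [mul_zero] at h
  refine squeeze_zero (fun n => ?_) (fun n => ?_) hlim
  · exact mul_nonneg (by positivity) (delta_bound _).1
  · have h1 := hl (n + 100)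
    obtain ⟨h2, h3⟩ := delta_bound (n + 100)
    have h4 := aseq_growth n
    have h5 : aseq (n + 100) * zeta3 - bseq (n + 100) ≤ 6 * zeta3 / 32 ^ n :=
      h3.trans (by gcongr)
    refine (mul_le_mul h1 h5 h2 (by positivity)).trans (le_of_eq ?_)
    rw [pow_add, div_pow]
    ring
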